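/- arXiv:1908.03108 — 2 statements merged into one kernel-verified Lean document; each statement's English description precedes it below -/
import Mathlib

section
/- For every complex number s with Im s > 0, the function P(z) = i z²/2 − (z/π)·Log(1 + e^{2πiz}) + (i/(2π²))·Li₂(−e^{2πiz}) has complex derivative at s equal to s·tan(πs); that is, P is differentiable at s with P′(s) = s·tan(πs). -/
open Complex Real

/-- The dilogarithm, defined by its power series `∑ wⁿ/n²` (convergent for `|w| < 1`). -/
noncomputable def dilog (w : ℂ) : ℂ := ∑' n : ℕ, w ^ (n + 1) / ((n : ℂ) + 1) ^ 2

/-- The derivative of the dilogarithm at a nonzero point `w` of the open unit disc. -/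
theorem hasDerivAt_dilog {w : ℂ} (hw : ‖w‖ < 1) (hw0 : w ≠ 0) :
    HasDerivAt dilog (-Complex.log (1 - w) / w) w := by
  obtain ⟨r, hwr, hr⟩ := exists_between hw
  have hr0 : 0 ≤ r := (norm_nonneg w).trans hwr.le
  have hsum : HasSum (fun n : ℕ => w ^ n / ((n : ℂ) + 1)) (-Complex.log (1 - w) / w) := by
    convert! (Complex.hasSum_taylorSeries_neg_log' hw).div_const w using 2 with n
    field_simp
    ring
  rw [← hsum.tsum_eq]
  have hderiv (n : ℕ) (y : ℂ) : HasDerivAt (fun z : ℂ => z ^ (n + 1) / ((n : ℂ) + 1) ^ 2)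
      (y ^ n / ((n : ℂ) + 1)) y := by
    have hn : (n : ℂ) + 1 ≠ 0 := Nat.cast_add_one_ne_zero n
    convert! (hasDerivAt_pow (n + 1) y).div_const (((n : ℂ) + 1) ^ 2) using 1
    push_cast
    field_simp
  refine hasDerivAt_tsum_of_isPreconnected (t := Metric.ball 0 r) (y₀ := 0)
    (summable_geometric_of_lt_one hr0 hr) Metric.isOpen_ball
    (convex_ball 0 r).isPreconnected (fun n y _ => hderiv n y) (fun n y hy => ?_)
    (Metric.mem_ball_self ((norm_nonneg w).trans_lt hwr)) (by simp) (by simpa using hwr)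
  have hn : ‖(n : ℂ) + 1‖ = (n : ℝ) + 1 := by
    exact_mod_cast Complex.norm_natCast (n + 1)
  rw [norm_div, norm_pow, hn]
  have hyr : ‖y‖ ≤ r := (mem_ball_zero_iff.mp hy).le
  calc ‖y‖ ^ n / ((n : ℝ) + 1) ≤ ‖y‖ ^ n := div_le_self (by positivity) (by simp)
    _ ≤ r ^ n := by gcongr

/-- The tangent in terms of the exponential `e^{2iz}`. -/
theorem tan_eq_exp_two_mul (z : ℂ) :
    Complex.tan z =
      Complex.I * (1 - Complex.exp (2 * Complex.I * z)) / (1 + Complex.exp (2 * Complex.I * z)) := by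
  have he : Complex.exp (2 * Complex.I * z) = Complex.exp (z * Complex.I) ^ 2 := by
    rw [← Complex.exp_nat_mul]
    congr 1
    push_cast
    ring
  have hne := Complex.exp_ne_zero (z * Complex.I)
  rw [Complex.tan, Complex.sin, Complex.cos, he, neg_mul, Complex.exp_neg]
  field_simp
  ring

theorem stmt_5 (s : ℂ) (hs : 0 < s.im) :
    HasDerivAt (fun z : ℂ =>
        Complex.I * z ^ 2 / 2
          - (z / (Real.pi : ℂ)) * Complex.log (1 + Complex.exp (2 * Real.pi * Complex.I * z))
          + (Complex.I / (2 * (Real.pi : ℂ) ^ 2)) * dilog (-Complex.exp (2 * Real.pi * Complex.I * z)))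
      (s * Complex.tan (Real.pi * s)) s := by
  have hexp : HasDerivAt (fun z : ℂ => Complex.exp (2 * Real.pi * Complex.I * z))
      (Complex.exp (2 * Real.pi * Complex.I * s) * (2 * Real.pi * Complex.I)) s := by
    simpa using ((hasDerivAt_id s).const_mul (2 * Real.pi * Complex.I)).cexp
  have hnorm : ‖Complex.exp (2 * Real.pi * Complex.I * s)‖ < 1 := by
    rw [Complex.norm_exp, Real.exp_lt_one_iff]
    simpa using by positivity
  have htan : Complex.tan (Real.pi * s) = Complex.I *
      (1 - Complex.exp (2 * Real.pi * Complex.I * s)) /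
        (1 + Complex.exp (2 * Real.pi * Complex.I * s)) := by
    rw [tan_eq_exp_two_mul]
    ring_nf
  have hslit := Complex.mem_slitPlane_of_norm_lt_one hnorm
  have hq0 := Complex.exp_ne_zero (2 * Real.pi * Complex.I * s)
  have hlog := (hexp.const_add 1).clog hslit
  have hdilog := (hasDerivAt_dilog (by rwa [norm_neg]) (neg_ne_zero.mpr hq0)).comp s hexp.neg
  have hq1 := Complex.slitPlane_ne_zero hslit
  have hpi : (Real.pi : ℂ) ≠ 0 := Complex.ofReal_ne_zero.mpr Real.pi_ne_zero
  convert! ((((hasDerivAt_pow 2 s).const_mul Complex.I).div_const 2).sub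
    (((hasDerivAt_id s).div_const (Real.pi : ℂ)).mul hlog)).add
    (hdilog.const_mul (Complex.I / (2 * (Real.pi : ℂ) ^ 2))) using 1
  rw [htan, sub_neg_eq_add]
  simp only [id]
  generalize Complex.exp (2 * Real.pi * Complex.I * s) = q at *
  field_simp
  push_cast
  ring_nf
  simp only [Complex.I_sq]
  ring
end

section
/- For every complex number s with Im s > 0, the integral of z·tan(πz) along the straight line segment from 0 to s, namely ∫₀¹ s²·u·tan(πsu) du, equals i s²/2 − (s/π)·Log(1 + e^{2πis}) + (i/(2π²))·Li₂(−e^{2πis}) + i/24. -/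
open Complex Real

theorem summable_one_div_succ_sq : Summable fun n : ℕ => 1 / ((n : ℝ) + 1) ^ 2 := by
  simpa using (summable_nat_add_iff 1).2 hasSum_zeta_two.summable

theorem norm_dilog_term_le {w : ℂ} (hw : ‖w‖ ≤ 1) (n : ℕ) :
    ‖w ^ (n + 1) / ((n : ℂ) + 1) ^ 2‖ ≤ 1 / ((n : ℝ) + 1) ^ 2 := by
  have h : ‖(n : ℂ) + 1‖ = (n : ℝ) + 1 := by
    exact_mod_cast Complex.norm_natCast (n + 1)
  rw [norm_div, norm_pow, norm_pow, h]
  gcongr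
  exact pow_le_one₀ (norm_nonneg w) hw

theorem continuousOn_dilog : ContinuousOn dilog (Metric.closedBall 0 1) := by
  refine continuousOn_tsum (fun n => by fun_prop) summable_one_div_succ_sq fun n w hw => ?_
  exact norm_dilog_term_le (by simpa using hw) n

theorem dilog_neg_one : dilog (-1) = -(Real.pi : ℂ) ^ 2 / 12 := by
  have hz : HasSum (fun n : ℕ => 1 / ((n : ℂ) + 1) ^ 2) ((Real.pi : ℂ) ^ 2 / 6) := by
    have h := (hasSum_nat_add_iff' 1).2 hasSum_zeta_two
    have := Complex.hasSum_ofReal.2 h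
    simpa using this
  have hodd : HasSum (fun k : ℕ => 1 / (((2 * k + 1 : ℕ) : ℂ) + 1) ^ 2)
      ((Real.pi : ℂ) ^ 2 / 24) := by
    rw [show (Real.pi : ℂ) ^ 2 / 24 = (Real.pi : ℂ) ^ 2 / 6 / 4 by ring]
    refine (hz.div_const 4).congr_fun fun k => ?_
    have hk : (k : ℂ) + 1 ≠ 0 := Nat.cast_add_one_ne_zero k
    rw [show ((2 * k + 1 : ℕ) : ℂ) + 1 = 2 * (k + 1) by push_cast; ring]
    field_simp
    norm_num
  have heven : HasSum (fun k : ℕ => 1 / (((2 * k : ℕ) : ℂ) + 1) ^ 2)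
      ((Real.pi : ℂ) ^ 2 / 8) := by
    have hs : Summable (fun k : ℕ => 1 / (((2 * k : ℕ) : ℂ) + 1) ^ 2) :=
      hz.summable.comp_injective (i := fun k : ℕ => 2 * k)
        fun a b hab => by simpa using hab
    have h := (HasSum.even_add_odd (f := fun n : ℕ => 1 / ((n : ℂ) + 1) ^ 2) hs.hasSum hodd).unique hz
    have : ∑' k : ℕ, 1 / (((2 * k : ℕ) : ℂ) + 1) ^ 2 = (Real.pi : ℂ) ^ 2 / 8 := by
      linear_combination h
    exact this ▸ hs.hasSum
  have h : HasSum (fun n : ℕ => (-1 : ℂ) ^ (n + 1) / ((n : ℂ) + 1) ^ 2)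
      (-((Real.pi : ℂ) ^ 2 / 8) + (Real.pi : ℂ) ^ 2 / 24) := by
    refine HasSum.even_add_odd ?_ ?_
    · refine heven.neg.congr_fun fun k => ?_
      rw [pow_succ, pow_mul]
      simp [neg_div]
    · refine hodd.congr_fun fun k => ?_
      rw [show 2 * k + 1 + 1 = 2 * (k + 1) by ring, pow_mul]
      simp
  rw [dilog, h.tsum_eq]
  ring

theorem cos_eq_exp_mul (z : ℂ) :
    Complex.cos z = Complex.exp (-z * I) * (1 + Complex.exp (2 * I * z)) / 2 := by
  rw [Complex.cos, mul_add, ← Complex.exp_add]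
  ring_nf

theorem sin_eq_exp_mul (z : ℂ) :
    Complex.sin z = I * (Complex.exp (-z * I) * (1 - Complex.exp (2 * I * z))) / 2 := by
  rw [Complex.sin, mul_sub, ← Complex.exp_add]
  ring_nf

theorem tan_eq_I_mul_exp (z : ℂ) :
    Complex.tan z = I * (1 - Complex.exp (2 * I * z)) / (1 + Complex.exp (2 * I * z)) := by
  have h := Complex.exp_ne_zero (-z * I)
  rw [Complex.tan, cos_eq_exp_mul, sin_eq_exp_mul, div_div_div_cancel_right₀ two_ne_zero,
    mul_left_comm, mul_div_mul_left _ _ h]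

theorem norm_exp_two_pi_I_mul_lt_one {z : ℂ} (hz : 0 < z.im) :
    ‖Complex.exp (2 * Real.pi * I * z)‖ < 1 := by
  rw [Complex.norm_exp, Real.exp_lt_one_iff]
  have : (2 * Real.pi * I * z).re = -(2 * Real.pi * z.im) := by simp
  rw [this]
  have := Real.pi_pos
  simp only [Left.neg_neg_iff]
  positivity

/-- A primitive of `z * tan (π z)` on the upper half-plane. -/
noncomputable def mulTanPrimitive (z : ℂ) : ℂ :=
  I * z ^ 2 / 2 - (z / (Real.pi : ℂ)) * Complex.log (1 + Complex.exp (2 * Real.pi * I * z))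
    + (I / (2 * (Real.pi : ℂ) ^ 2)) * dilog (-Complex.exp (2 * Real.pi * I * z)) + I / 24

theorem mulTanPrimitive_zero : mulTanPrimitive 0 = 0 := by
  have hpi : (Real.pi : ℂ) ≠ 0 := by exact_mod_cast Real.pi_ne_zero
  simp only [mulTanPrimitive, mul_zero, Complex.exp_zero, dilog_neg_one]
  field_simp
  ring

theorem hasDerivAt_mulTanPrimitive {z : ℂ} (hz : 0 < z.im) :
    HasDerivAt mulTanPrimitive (z * Complex.tan (Real.pi * z)) z := by
  have hpi : (Real.pi : ℂ) ≠ 0 := by exact_mod_cast Real.pi_ne_zero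
  have hq := norm_exp_two_pi_I_mul_lt_one hz
  have hexp : HasDerivAt (fun z : ℂ => Complex.exp (2 * Real.pi * I * z))
      (Complex.exp (2 * Real.pi * I * z) * (2 * Real.pi * I)) z := by
    simpa using ((hasDerivAt_id z).const_mul (2 * Real.pi * I)).cexp
  have hslit := mem_slitPlane_of_norm_lt_one hq
  have hlog := (hexp.const_add 1).clog hslit
  have hli := (hasDerivAt_dilog (w := -Complex.exp (2 * Real.pi * I * z)) (by simpa using hq)
    (neg_ne_zero.2 (Complex.exp_ne_zero _))).comp z hexp.neg
  have h := ((((((hasDerivAt_id z).pow 2).const_mul I).div_const 2).sub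
    (((hasDerivAt_id z).div_const (Real.pi : ℂ)).mul hlog)).add
    (hli.const_mul (I / (2 * (Real.pi : ℂ) ^ 2)))).add_const (I / 24)
  refine h.congr_deriv ?_
  have hne := slitPlane_ne_zero hslit
  have hE := Complex.exp_ne_zero (2 * Real.pi * I * z)
  rw [tan_eq_I_mul_exp, show 2 * I * (Real.pi * z) = 2 * Real.pi * I * z by ring]
  generalize Complex.exp (2 * Real.pi * I * z) = q at *
  simp only [sub_neg_eq_add, id]
  generalize Complex.log (1 + q) = L at *
  field_simp
  ring_nf
  simp only [I_sq]
  ring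

theorem stmt_7 (s : ℂ) (hs : 0 < s.im) :
    (∫ u in (0:ℝ)..1, s ^ 2 * (u : ℂ) * Complex.tan (Real.pi * s * u)) =
      Complex.I * s ^ 2 / 2
        - (s / (Real.pi : ℂ)) * Complex.log (1 + Complex.exp (2 * Real.pi * Complex.I * s))
        + (Complex.I / (2 * (Real.pi : ℂ) ^ 2)) * dilog (-Complex.exp (2 * Real.pi * Complex.I * s))
        + Complex.I / 24 := by
  have him {u : ℝ} (hu : 0 < u) : 0 < (s * u).im := by
    simpa using mul_pos hs hu
  have hnorm (u : ℝ) (hu : u ∈ Set.Icc (0 : ℝ) 1) :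
      ‖Complex.exp (2 * Real.pi * I * (s * u))‖ ≤ 1 := by
    rcases hu.1.eq_or_lt with rfl | h
    · simp
    · exact (norm_exp_two_pi_I_mul_lt_one (him h)).le
  have hslit (u : ℝ) (hu : u ∈ Set.Icc (0 : ℝ) 1) :
      1 + Complex.exp (2 * Real.pi * I * (s * u)) ∈ slitPlane := by
    rcases hu.1.eq_or_lt with rfl | h
    · left; norm_num
    · exact mem_slitPlane_of_norm_lt_one (norm_exp_two_pi_I_mul_lt_one (him h))
  have hcont : ContinuousOn (fun u : ℝ => mulTanPrimitive (s * u)) (Set.Icc 0 1) := by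
    have hli : ContinuousOn
        (fun u : ℝ => dilog (-Complex.exp (2 * Real.pi * I * (s * u)))) (Set.Icc 0 1) :=
      continuousOn_dilog.comp (by fun_prop) fun u hu => by simpa using hnorm u hu
    have hlog : ContinuousOn
        (fun u : ℝ => Complex.log (1 + Complex.exp (2 * Real.pi * I * (s * u)))) (Set.Icc 0 1) :=
      ContinuousOn.clog (by fun_prop) hslit
    unfold mulTanPrimitive
    fun_prop
  have hderiv (u : ℝ) (hu : u ∈ Set.Ioo (0 : ℝ) 1) :
      HasDerivAt (fun u : ℝ => mulTanPrimitive (s * u))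
        (s ^ 2 * (u : ℂ) * Complex.tan (Real.pi * s * u)) u := by
    have hlin : HasDerivAt (fun u : ℝ => s * (u : ℂ)) s u := by
      simpa using (Complex.ofRealCLM.hasDerivAt (x := u)).const_mul s
    refine ((hasDerivAt_mulTanPrimitive (him hu.1)).comp u hlin).congr_deriv ?_
    rw [mul_assoc (Real.pi : ℂ)]
    ring
  have hint : IntervalIntegrable
      (fun u : ℝ => s ^ 2 * (u : ℂ) * Complex.tan (Real.pi * s * u)) MeasureTheory.volume 0 1 := by
    refine ContinuousOn.intervalIntegrable_of_Icc zero_le_one ?_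
    have htan : ContinuousOn (fun u : ℝ => Complex.tan (Real.pi * s * u)) (Set.Icc 0 1) := by
      simp only [tan_eq_I_mul_exp]
      refine ContinuousOn.div (by fun_prop) (by fun_prop) fun u hu => ?_
      rw [show 2 * I * (Real.pi * s * u) = 2 * Real.pi * I * (s * u) by ring]
      exact slitPlane_ne_zero (hslit u hu)
    fun_prop
  rw [intervalIntegral.integral_eq_sub_of_hasDerivAt_of_le zero_le_one hcont hderiv hint]
  simp only [ofReal_zero, ofReal_one, mul_zero, mul_one, mulTanPrimitive_zero, sub_zero]
  rfl
end
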